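/- Assume f satisfies (A1)–(A3) and fix χ > 0. There is ε₀ > 0 such that for all 0 < ε < ε₀: if there is a weak edge Ψ_{ŷ}^q ⤎ Ψ_{x̂}^p between ε-charts, then: (1) G_{x̂,ŷ}([−p, p]) ⊂ [−q, q]; (2) if z ∈ Ψ_{x̂}([−p, p]) then g_{x̂}(z) is the unique point y ∈ Ψ_{ŷ}([−q, q]) with f(y) = z. -/

import Mathlib

open Real MeasureTheory Filter Topology Metric Set

noncomputable section

namespace OneDim

/-- The interval `M = [0, 1/2]`. -/
def Mset : Set ℝ := Set.Icc 0 (1/2)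

/-- Data of a piecewise `C^{1+β}` interval map `f : M → M` with discontinuity set `D`,
constants `β ∈ (0,1)`, `a, K > 1`, radius function `r` and inverse branches `g`. -/
structure GoodMap where
  f : ℝ → ℝ
  D : Set ℝ
  β : ℝ
  a : ℝ
  K : ℝ
  r : ℝ → ℝ
  g : ℝ → ℝ → ℝ
  hβ0 : 0 < β
  hβ1 : β < 1
  ha : 1 < a
  hK : 1 < K
  hmaps : ∀ x ∈ Mset, f x ∈ Mset
  hD : D ⊆ Mset
  hdiff : DifferentiableOn ℝ f (Mset \ D)

namespace GoodMap

/-- The critical set `C = {x ∈ M \ D : df_x = 0}`. -/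
def crit (F : GoodMap) : Set ℝ := {x | x ∈ Mset \ F.D ∧ deriv F.f x = 0}

/-- The singular set `S = C ∪ D`. -/
def S (F : GoodMap) : Set ℝ := F.crit ∪ F.D

/-- Distance to the singular set. -/
def dS (F : GoodMap) (x : ℝ) : ℝ := Metric.infDist x F.S

/-- Conditions (A1)–(A3). -/
def SatA (F : GoodMap) : Prop :=
  ∀ x ∈ Mset, x ∉ F.S → F.f x ∉ F.S →
    (min (F.dS x ^ F.a) (F.dS (F.f x) ^ F.a) < F.r x ∧ F.r x < 1) ∧
    -- (A1)
    (Set.InjOn F.f (Metric.ball x (2 * F.r x)) ∧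
      (∀ y ∈ Metric.ball x (2 * F.r x), DifferentiableAt ℝ F.f y) ∧
      F.g x (F.f x) = x ∧
      (∀ z ∈ Metric.ball (F.f x) (2 * F.r x), F.f (F.g x z) = z) ∧
      Set.InjOn (F.g x) (Metric.ball (F.f x) (2 * F.r x)) ∧
      (∀ z ∈ Metric.ball (F.f x) (2 * F.r x), DifferentiableAt ℝ (F.g x) z)) ∧
    -- (A2)
    ((∀ y ∈ Metric.ball x (2 * F.r x),
        F.dS x ^ F.a ≤ |deriv F.f y| ∧ |deriv F.f y| ≤ F.dS x ^ (-F.a)) ∧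
      (∀ z ∈ Metric.ball (F.f x) (2 * F.r x),
        F.dS x ^ F.a ≤ |deriv (F.g x) z| ∧ |deriv (F.g x) z| ≤ F.dS x ^ (-F.a))) ∧
    -- (A3)
    ((∀ y ∈ Metric.ball x (2 * F.r x), ∀ z ∈ Metric.ball x (2 * F.r x),
        |deriv F.f y - deriv F.f z| ≤ F.K * |y - z| ^ F.β) ∧
      (∀ y ∈ Metric.ball (F.f x) (2 * F.r x), ∀ z ∈ Metric.ball (F.f x) (2 * F.r x),
        |deriv (F.g x) y - deriv (F.g x) z| ≤ F.K * |y - z| ^ F.β))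

end GoodMap

/-- Membership in the natural extension space `M̂`. -/
def inMhat (f : ℝ → ℝ) (x : ℤ → ℝ) : Prop :=
  (∀ n, x n ∈ Mset) ∧ ∀ n : ℤ, f (x (n - 1)) = x n

/-- The natural extension map `f̂` (left shift). -/
def fhat (x : ℤ → ℝ) : ℤ → ℝ := fun n => x (n + 1)

/-- Iterate `f̂^k` of the natural extension map, `k ∈ ℤ`. -/
def fhatI (k : ℤ) (x : ℤ → ℝ) : ℤ → ℝ := fun n => x (n + k)

/-- The metric `d̂(x̂,ŷ) = sup{2^n d(x_n,y_n) : n ≤ 0}` on `M̂`. -/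
def dhat (x y : ℤ → ℝ) : ℝ :=
  sSup {t : ℝ | ∃ n : ℤ, n ≤ 0 ∧ t = (2:ℝ) ^ n * |x n - y n|}

/-- The invertible derivative cocycle `d̂f^{(n)}` over `f̂`. -/
def dfhat (f : ℝ → ℝ) (x : ℤ → ℝ) (n : ℤ) : ℝ :=
  if 0 ≤ n then ∏ j ∈ Finset.range n.toNat, deriv f (x (j : ℤ))
  else (∏ j ∈ Finset.range (-n).toNat, deriv f (x (-(j : ℤ) - 1)))⁻¹

/-- The Pesin parameter `u(x̂)`. -/
def uPes (f : ℝ → ℝ) (χ : ℝ) (x : ℤ → ℝ) : ℝ :=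
  Real.sqrt (∑' n : ℕ, Real.exp (2 * (n:ℝ) * χ) * (dfhat f x (-(n:ℤ))) ^ 2)

/-- The Pesin chart `Ψ_{x̂}(t) = t/u(x̂) + x₀`. -/
def Psi (f : ℝ → ℝ) (χ : ℝ) (x : ℤ → ℝ) (t : ℝ) : ℝ := t / uPes f χ x + x 0

/-- The set `NUE_χ`. -/
def NUE (F : GoodMap) (χ : ℝ) : Set (ℤ → ℝ) :=
  {x | inMhat F.f x ∧ (∀ n, x n ∉ F.S) ∧
    (∃ l > χ, Tendsto (fun n : ℕ => Real.log |dfhat F.f x (n:ℤ)| / (n:ℝ)) atTop (𝓝 l)) ∧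
    (∃ l > χ, Tendsto (fun n : ℕ => Real.log |dfhat F.f x (-(n:ℤ))| / (-(n:ℝ))) atTop (𝓝 l))}

/-- `ρ(x̂) = d({x₋₁,x₀,x₁}, S)`. -/
def rho (F : GoodMap) (x : ℤ → ℝ) : ℝ :=
  min (F.dS (x (-1))) (min (F.dS (x 0)) (F.dS (x 1)))

/-- `I_ε = {e^{-εn/3} : n ≥ 0}`. -/
def Ieps (ε : ℝ) : Set ℝ := {q | ∃ n : ℕ, q = Real.exp (-(ε * n) / 3)}

/-- `Q̃_ε(x̂)`. -/
def Qtilde (F : GoodMap) (χ ε : ℝ) (x : ℤ → ℝ) : ℝ :=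
  ε ^ (3 / F.β) *
    min (uPes F.f χ x ^ (-(24 / F.β)))
      (uPes F.f χ (fhatI (-1) x) ^ (-(12 / F.β)) * rho F x ^ (72 * F.a / F.β))

/-- `Q_ε(x̂) = max{q ∈ I_ε : q ≤ Q̃_ε(x̂)}`. -/
def Qeps (F : GoodMap) (χ ε : ℝ) (x : ℤ → ℝ) : ℝ :=
  sSup {q | q ∈ Ieps ε ∧ q ≤ Qtilde F χ ε x}

/-- The regular set. -/
def Reg (F : GoodMap) : Set (ℤ → ℝ) :=
  {x | inMhat F.f x ∧ (∀ n, x n ∉ F.S) ∧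
    Tendsto (fun n : ℕ => Real.log (F.dS (x (n:ℤ))) / (n:ℝ)) atTop (𝓝 0) ∧
    Tendsto (fun n : ℕ => Real.log (F.dS (x (-(n:ℤ)))) / (n:ℝ)) atTop (𝓝 0)}

/-- The set `NUE*_χ`. -/
def NUEstar (F : GoodMap) (χ : ℝ) : Set (ℤ → ℝ) :=
  {x | x ∈ NUE F χ ∧ x ∈ Reg F ∧
    (∃ nk : ℕ → ℤ, Tendsto nk atTop atBot ∧
      Tendsto (fun k => uPes F.f χ (fhatI (nk k) x)) atTop (𝓝 (uPes F.f χ x))) ∧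
    Tendsto (fun n : ℕ => Real.log (uPes F.f χ (fhatI (-(n:ℤ)) x)) / (-(n:ℝ))) atTop (𝓝 0)}

/-- An ε-chart is a pair `(x̂, p)`, representing `Ψ_{x̂}` restricted to `[-p,p]`. -/
structure Chart where
  x : ℤ → ℝ
  p : ℝ

/-- `(x̂, p)` is a genuine ε-chart. -/
def IsChart (F : GoodMap) (χ ε : ℝ) (c : Chart) : Prop :=
  c.x ∈ NUE F χ ∧ 0 < c.p ∧ c.p ≤ Qeps F χ ε c.x

/-- ε-overlap of two ε-charts. -/
def Overlap (F : GoodMap) (χ ε : ℝ) (c₁ c₂ : Chart) : Prop :=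
  Real.exp (-ε) ≤ c₁.p / c₂.p ∧ c₁.p / c₂.p ≤ Real.exp ε ∧
  |c₁.x 0 - c₂.x 0| + |(uPes F.f χ c₁.x)⁻¹ - (uPes F.f χ c₂.x)⁻¹| < (c₁.p * c₂.p) ^ 4

/-- `g_{x̂} = g_{x₋₁}`, the inverse branch of `f` taking `x₀` to `x₋₁`. -/
def ghat (F : GoodMap) (x : ℤ → ℝ) : ℝ → ℝ := F.g (x (-1))

/-- `G_{x̂} = Ψ_{f̂⁻¹x̂}⁻¹ ∘ g_{x̂} ∘ Ψ_{x̂}`. -/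
def Gmap (F : GoodMap) (χ : ℝ) (x : ℤ → ℝ) (t : ℝ) : ℝ :=
  uPes F.f χ (fhatI (-1) x) * (ghat F x (Psi F.f χ x t) - x (-1))

/-- `G_{x̂,ŷ} = Ψ_{ŷ}⁻¹ ∘ g_{x̂} ∘ Ψ_{x̂}`. -/
def Gmap2 (F : GoodMap) (χ : ℝ) (x y : ℤ → ℝ) (t : ℝ) : ℝ :=
  uPes F.f χ y * (ghat F x (Psi F.f χ x t) - y 0)

/-- `F_{x̂} = Ψ_{f̂x̂}⁻¹ ∘ f ∘ Ψ_{x̂}`. -/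
def Fmap (F : GoodMap) (χ : ℝ) (x : ℤ → ℝ) (t : ℝ) : ℝ :=
  uPes F.f χ (fhat x) * (F.f (Psi F.f χ x t) - x 1)

/-- `δ_ε = e^{-εn}` where `n` is the unique positive integer with `e^{-εn} < ε ≤ e^{-ε(n-1)}`. -/
def deltaEps (ε : ℝ) : ℝ :=
  Real.exp (-(ε * ((⌊Real.log (1 / ε) / ε⌋ + 1 : ℤ) : ℝ)))

/-- Weak edge `v ⤎ w` (from `w = Ψ_{x̂}^p` to `v = Ψ_{ŷ}^q`). -/
def WeakEdge (F : GoodMap) (χ ε : ℝ) (v w : Chart) : Prop :=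
  IsChart F χ ε v ∧ IsChart F χ ε w ∧
  Overlap F χ ε ⟨fhatI (-1) w.x, v.p⟩ v ∧
  w.p ≤ Real.exp ε * v.p

/-- Edge `v ← w` (from `w = Ψ_{x̂}^p` to `v = Ψ_{ŷ}^q`). -/
def Edge (F : GoodMap) (χ ε : ℝ) (v w : Chart) : Prop :=
  IsChart F χ ε v ∧ IsChart F χ ε w ∧
  Overlap F χ ε ⟨fhatI (-1) w.x, v.p⟩ v ∧
  |v.x 1 - w.x 0| < v.p ∧
  Real.exp (-v.p) ≤ uPes F.f χ (fhat v.x) / uPes F.f χ w.x ∧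
  uPes F.f χ (fhat v.x) / uPes F.f χ w.x ≤ Real.exp v.p ∧
  w.p = min (Real.exp ε * v.p) (deltaEps ε * Qeps F χ ε w.x)

/-- ε-generalized pseudo-orbit. -/
def IsGPO (F : GoodMap) (χ ε : ℝ) (v : ℤ → Chart) : Prop :=
  ∀ n : ℤ, Edge F χ ε (v n) (v (n + 1))

/-- weak ε-generalized pseudo-orbit. -/
def IsWeakGPO (F : GoodMap) (χ ε : ℝ) (v : ℤ → Chart) : Prop :=
  ∀ n : ℤ, WeakEdge F χ ε (v n) (v (n + 1))

/-- The range `Ψ_{x̂}([-p,p])` of an ε-chart. -/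
def chartRange (F : GoodMap) (χ : ℝ) (c : Chart) : Set ℝ :=
  Psi F.f χ c.x '' Set.Icc (-c.p) c.p

/-- A bi-infinite sequence of ε-charts shadows `x̂ ∈ M̂`. -/
def Shadows (F : GoodMap) (χ : ℝ) (v : ℤ → Chart) (x : ℤ → ℝ) : Prop :=
  inMhat F.f x ∧ ∀ n : ℤ, x n ∈ chartRange F χ (v n)

/-- `q_ε(x̂) = δ_ε inf{e^{ε|m|} Q_ε(f̂^m x̂) : m ≤ 0}`. -/
def qeps (F : GoodMap) (χ ε : ℝ) (x : ℤ → ℝ) : ℝ :=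
  deltaEps ε *
    sInf {t : ℝ | ∃ m : ℤ, m ≤ 0 ∧ t = Real.exp (ε * |(m:ℝ)|) * Qeps F χ ε (fhatI m x)}

/-- Recurrence: some symbol repeats infinitely often in the future and some in the past. -/
def Recurrent {V : Type*} (v : ℤ → V) : Prop :=
  (∃ c, {n : ℤ | 0 < n ∧ v n = c}.Infinite) ∧ ∃ c, {n : ℤ | n < 0 ∧ v n = c}.Infinite

/-- The distance `d(v,w) = exp(-min{|n| : v_n ≠ w_n})` on sequence spaces. -/
def dSigma {V : Type*} (v w : ℤ → V) : ℝ :=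
  sSup {t : ℝ | ∃ n : ℤ, v n ≠ w n ∧ t = Real.exp (-|(n:ℝ)|)}

/-- Sup norm over a set. -/
def supNorm (h : ℝ → ℝ) (I : Set ℝ) : ℝ := sSup ((fun t => |h t|) '' I)

/-- Hölder constant over a set. -/
def holConst (γ : ℝ) (h : ℝ → ℝ) (I : Set ℝ) : ℝ :=
  sSup {r : ℝ | ∃ t ∈ I, ∃ s ∈ I, t ≠ s ∧ r = |h t - h s| / |t - s| ^ γ}

/-!
The Pesin parameter satisfies `u(x̂)² = 1 + e^{2χ} |df_{x₋₁}|⁻² u(f̂⁻¹x̂)²`, so in Pesin charts the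
derivative of the inverse branch at the centre is at most `e^{-χ}` in absolute value. The factors
of `Q_ε` make the Hölder error of this derivative over `[-p, p]` at most `Kε`, hence `G_{x̂}`
contracts by `e^{-χ} + Kε`. Replacing the chart at `f̂⁻¹x̂` by the overlapping chart at `ŷ` is an
affine change of coordinates of slope at most `1 + ε` and offset at most `εq`. Since `p ≤ e^ε q`,
the image of `[-p, p]` lies in `[-q, q]` once `(1 + ε)(e^{-χ} + Kε)e^ε + ε < 1`. Uniqueness holds
because `Ψ_{ŷ}([-q, q])` lies in the ball around `y₀` on which `f` is injective.
-/

section Analysis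

theorem rpow_mul_rpow_neg_le_mul_inv {ε v s t : ℝ} (hε : 0 ≤ ε) (hε1 : ε ≤ 1) (hv : 1 ≤ v)
    (hs : 1 ≤ s) (ht : 1 ≤ t) : ε ^ s * v ^ (-t) ≤ ε * v⁻¹ := by
  have hv_rpow : v ^ (-t) ≤ v⁻¹ := by
    rw [← Real.rpow_neg_one]
    exact Real.rpow_le_rpow_of_exponent_le hv (neg_le_neg ht)
  exact mul_le_mul (Real.rpow_le_self_of_le_one hε hε1 hs) hv_rpow (by positivity) hε

theorem summable_exp_mul_sq_of_tendsto_log_div {c : ℕ → ℝ} {χ l : ℝ} (hl : χ < l)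
    (hc : Tendsto (fun n : ℕ => Real.log |c n| / (-(n : ℝ))) atTop (𝓝 l)) :
    Summable fun n : ℕ => Real.exp (2 * (n : ℝ) * χ) * c n ^ 2 := by
  obtain ⟨m, hχm, hml⟩ := exists_between hl
  have hratio : Real.exp (2 * (χ - m)) < 1 := Real.exp_lt_one_iff.2 (by linarith)
  refine Summable.of_norm_bounded_eventually_nat
    (summable_geometric_of_lt_one (Real.exp_pos _).le hratio) ?_
  filter_upwards [hc.eventually_const_lt hml, eventually_gt_atTop 0] with n hn hn0
  have hlog : Real.log |c n| ≤ -(n * m) := by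
    rw [div_neg, lt_neg, div_lt_iff₀ (Nat.cast_pos.2 hn0)] at hn
    linarith
  have hexp : |c n| ≤ Real.exp (-(n * m)) :=
    (Real.le_exp_log _).trans (Real.exp_le_exp.2 hlog)
  rw [Real.norm_of_nonneg (by positivity), ← sq_abs (c n)]
  calc Real.exp (2 * (n : ℝ) * χ) * |c n| ^ 2
      ≤ Real.exp (2 * (n : ℝ) * χ) * Real.exp (-(n * m)) ^ 2 := by gcongr
    _ = Real.exp (2 * (χ - m)) ^ n := by
        rw [← Real.exp_nat_mul, ← Real.exp_nat_mul, ← Real.exp_add]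
        congr 1
        push_cast
        ring

theorem norm_image_sub_le_of_deriv_holder {𝕜 E : Type*} [RCLike 𝕜] [NormedAddCommGroup E]
    [NormedSpace 𝕜 E] {g : 𝕜 → E} {c z : 𝕜} {K β R : ℝ} (hK : 0 ≤ K) (hβ : 0 ≤ β)
    (hg : ∀ w ∈ ball c R, DifferentiableAt 𝕜 g w)
    (hg' : ∀ w ∈ ball c R, ‖deriv g w - deriv g c‖ ≤ K * ‖w - c‖ ^ β) (hz : z ∈ ball c R) :
    ‖g z - g c‖ ≤ (‖deriv g c‖ + K * ‖z - c‖ ^ β) * ‖z - c‖ := by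
  have hsub : closedBall c ‖z - c‖ ⊆ ball c R :=
    closedBall_subset_ball (mem_ball_iff_norm.1 hz)
  refine (convex_closedBall c ‖z - c‖).norm_image_sub_le_of_norm_deriv_le
    (fun w hw => hg w (hsub hw)) (fun w hw => ?_) (mem_closedBall_self (norm_nonneg _))
    (mem_closedBall_iff_norm.2 le_rfl)
  calc ‖deriv g w‖ ≤ ‖deriv g c‖ + ‖deriv g w - deriv g c‖ := norm_le_norm_add_norm_sub' _ _
    _ ≤ ‖deriv g c‖ + K * ‖w - c‖ ^ β := by gcongr; exact hg' w (hsub hw)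
    _ ≤ ‖deriv g c‖ + K * ‖z - c‖ ^ β := by gcongr; exact mem_closedBall_iff_norm.1 hw

end Analysis

section PesinParameter

variable {f : ℝ → ℝ} {χ : ℝ} {x : ℤ → ℝ}

theorem dfhat_neg_natCast (f : ℝ → ℝ) (x : ℤ → ℝ) (n : ℕ) :
    dfhat f x (-(n : ℤ)) = (∏ j ∈ Finset.range n, deriv f (x (-(j : ℤ) - 1)))⁻¹ := by
  rcases n.eq_zero_or_pos with rfl | hn
  · simp [dfhat]
  · rw [dfhat, if_neg (by omega), neg_neg, Int.toNat_natCast]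

theorem dfhat_neg_succ (f : ℝ → ℝ) (x : ℤ → ℝ) (n : ℕ) :
    dfhat f x (-((n + 1 : ℕ) : ℤ)) =
      (deriv f (x (-1)))⁻¹ * dfhat f (fhatI (-1) x) (-(n : ℤ)) := by
  have hshift (j : ℕ) : x (-((j + 1 : ℕ) : ℤ) - 1) = fhatI (-1) x (-(j : ℤ) - 1) := by
    rw [fhatI]
    congr 1
    push_cast
    ring
  rw [dfhat_neg_natCast, dfhat_neg_natCast, Finset.prod_range_succ', mul_inv_rev]
  simp only [hshift, Nat.cast_zero, neg_zero, zero_sub]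

/-- The `n`-th summand of the series defining `u(x̂)²`. -/
def pesinTerm (f : ℝ → ℝ) (χ : ℝ) (x : ℤ → ℝ) (n : ℕ) : ℝ :=
  Real.exp (2 * (n : ℝ) * χ) * dfhat f x (-(n : ℤ)) ^ 2

theorem pesinTerm_nonneg (f : ℝ → ℝ) (χ : ℝ) (x : ℤ → ℝ) (n : ℕ) : 0 ≤ pesinTerm f χ x n := by
  unfold pesinTerm
  positivity

theorem pesinTerm_zero (f : ℝ → ℝ) (χ : ℝ) (x : ℤ → ℝ) : pesinTerm f χ x 0 = 1 := by
  simp [pesinTerm, dfhat]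

theorem pesinTerm_succ (f : ℝ → ℝ) (χ : ℝ) (x : ℤ → ℝ) (n : ℕ) :
    pesinTerm f χ x (n + 1) =
      (Real.exp χ * (deriv f (x (-1)))⁻¹) ^ 2 * pesinTerm f χ (fhatI (-1) x) n := by
  have hexp : Real.exp (2 * ((n + 1 : ℕ) : ℝ) * χ) =
      Real.exp χ ^ 2 * Real.exp (2 * (n : ℝ) * χ) := by
    rw [← Real.exp_nat_mul, ← Real.exp_add]
    congr 1
    push_cast
    ring
  rw [pesinTerm, pesinTerm, dfhat_neg_succ, hexp]
  ring

theorem summable_pesinTerm_fhatI (hderiv : deriv f (x (-1)) ≠ 0)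
    (hsum : Summable (pesinTerm f χ x)) : Summable (pesinTerm f χ (fhatI (-1) x)) := by
  have htail := (summable_nat_add_iff 1).2 hsum
  simp only [pesinTerm_succ] at htail
  exact (summable_mul_left_iff (by positivity)).1 htail

theorem uPes_nonneg (f : ℝ → ℝ) (χ : ℝ) (x : ℤ → ℝ) : 0 ≤ uPes f χ x :=
  Real.sqrt_nonneg _

theorem uPes_sq (f : ℝ → ℝ) (χ : ℝ) (x : ℤ → ℝ) :
    uPes f χ x ^ 2 = ∑' n, pesinTerm f χ x n :=
  Real.sq_sqrt (tsum_nonneg (pesinTerm_nonneg f χ x))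

theorem uPes_sq_eq_one_add (hsum : Summable (pesinTerm f χ x)) :
    uPes f χ x ^ 2 =
      1 + (Real.exp χ * |deriv f (x (-1))|⁻¹ * uPes f χ (fhatI (-1) x)) ^ 2 := by
  rw [uPes_sq, hsum.tsum_eq_zero_add, pesinTerm_zero]
  simp only [pesinTerm_succ]
  rw [tsum_mul_left, ← uPes_sq, mul_pow, mul_pow, mul_pow, inv_pow, inv_pow, sq_abs]

theorem one_le_uPes (hsum : Summable (pesinTerm f χ x)) : 1 ≤ uPes f χ x := by
  rw [← one_le_sq_iff₀ (uPes_nonneg f χ x), uPes_sq_eq_one_add hsum]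
  exact le_add_of_nonneg_right (sq_nonneg _)

theorem uPes_fhatI_mul_inv_abs_deriv_le (hsum : Summable (pesinTerm f χ x)) :
    uPes f χ (fhatI (-1) x) * |deriv f (x (-1))|⁻¹ ≤ Real.exp (-χ) * uPes f χ x := by
  have hle : Real.exp χ * |deriv f (x (-1))|⁻¹ * uPes f χ (fhatI (-1) x) ≤ uPes f χ x := by
    refine le_of_sq_le_sq ?_ (uPes_nonneg f χ x)
    rw [uPes_sq_eq_one_add hsum]
    exact le_add_of_nonneg_left zero_le_one
  rw [Real.exp_neg, inv_mul_eq_div, le_div_iff₀ (Real.exp_pos χ)]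
  linarith

end PesinParameter

namespace GoodMap

variable {F : GoodMap} {z : ℝ}

theorem S_subset_Mset (F : GoodMap) : F.S ⊆ Mset :=
  union_subset (fun _ hz => hz.1.1) F.hD

theorem dS_nonneg (F : GoodMap) (z : ℝ) : 0 ≤ F.dS z :=
  infDist_nonneg

theorem dS_le_one (hz : z ∈ Mset) : F.dS z ≤ 1 := by
  rcases F.S.eq_empty_or_nonempty with hS | ⟨s, hs⟩
  · simp [dS, hS]
  · calc F.dS z ≤ dist z s := infDist_le_dist_of_mem hs
      _ ≤ 1 / 2 - 0 := Real.dist_le_of_mem_Icc hz (F.S_subset_Mset hs)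
      _ ≤ 1 := by norm_num

/-- The points at which (A1)–(A3) are assumed. -/
def regularPoints (F : GoodMap) : Set ℝ :=
  {z | z ∈ Mset ∧ z ∉ F.S ∧ F.f z ∉ F.S}

theorem deriv_ne_zero_of_mem_regularPoints (hz : z ∈ F.regularPoints) : deriv F.f z ≠ 0 :=
  fun hderiv => hz.2.1 (Or.inl ⟨⟨hz.1, fun hD => hz.2.1 (Or.inr hD)⟩, hderiv⟩)

namespace SatA

theorem rpow_lt_r (hA : F.SatA) (hz : z ∈ F.regularPoints) {ρ : ℝ} (hρ : 0 ≤ ρ)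
    (hρz : ρ ≤ F.dS z) (hρfz : ρ ≤ F.dS (F.f z)) : ρ ^ F.a < F.r z := by
  have ha : 0 ≤ F.a := zero_le_one.trans F.ha.le
  have hr := (hA z hz.1 hz.2.1 hz.2.2).1.1
  exact (le_min (Real.rpow_le_rpow hρ hρz ha) (Real.rpow_le_rpow hρ hρfz ha)).trans_lt hr

theorem r_pos (hA : F.SatA) (hz : z ∈ F.regularPoints) : 0 < F.r z := by
  have ha : F.a ≠ 0 := (zero_lt_one.trans F.ha).ne'
  simpa [Real.zero_rpow ha] using
    hA.rpow_lt_r hz le_rfl (F.dS_nonneg z) (F.dS_nonneg (F.f z))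

theorem injOn_f (hA : F.SatA) (hz : z ∈ F.regularPoints) :
    InjOn F.f (ball z (2 * F.r z)) :=
  (hA z hz.1 hz.2.1 hz.2.2).2.1.1

theorem g_f (hA : F.SatA) (hz : z ∈ F.regularPoints) : F.g z (F.f z) = z :=
  (hA z hz.1 hz.2.1 hz.2.2).2.1.2.2.1

theorem f_g (hA : F.SatA) (hz : z ∈ F.regularPoints) {w : ℝ}
    (hw : w ∈ ball (F.f z) (2 * F.r z)) : F.f (F.g z w) = w :=
  (hA z hz.1 hz.2.1 hz.2.2).2.1.2.2.2.1 w hw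

theorem differentiableAt_f (hA : F.SatA) (hz : z ∈ F.regularPoints) : DifferentiableAt ℝ F.f z :=
  (hA z hz.1 hz.2.1 hz.2.2).2.1.2.1 z (mem_ball_self (by linarith [hA.r_pos hz]))

theorem differentiableAt_g (hA : F.SatA) (hz : z ∈ F.regularPoints) {w : ℝ}
    (hw : w ∈ ball (F.f z) (2 * F.r z)) : DifferentiableAt ℝ (F.g z) w :=
  (hA z hz.1 hz.2.1 hz.2.2).2.1.2.2.2.2.2 w hw

theorem abs_deriv_g_sub_le (hA : F.SatA) (hz : z ∈ F.regularPoints) {v w : ℝ}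
    (hv : v ∈ ball (F.f z) (2 * F.r z)) (hw : w ∈ ball (F.f z) (2 * F.r z)) :
    |deriv (F.g z) v - deriv (F.g z) w| ≤ F.K * |v - w| ^ F.β :=
  (hA z hz.1 hz.2.1 hz.2.2).2.2.2.2 v hv w hw

theorem deriv_g_f (hA : F.SatA) (hz : z ∈ F.regularPoints) :
    deriv (F.g z) (F.f z) = (deriv F.f z)⁻¹ := by
  have hr : 0 < 2 * F.r z := by linarith [hA.r_pos hz]
  refine (HasDerivAt.of_local_left_inverse (f := F.f)
    (hA.differentiableAt_g hz (mem_ball_self hr)).continuousAt ?_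
    (deriv_ne_zero_of_mem_regularPoints hz) ?_).deriv
  · rw [hA.g_f hz]
    exact (hA.differentiableAt_f hz).hasDerivAt
  · filter_upwards [ball_mem_nhds (F.f z) hr] with w hw using hA.f_g hz hw

theorem abs_g_sub_le (hA : F.SatA) (hz : z ∈ F.regularPoints) {w : ℝ}
    (hw : w ∈ ball (F.f z) (2 * F.r z)) :
    |F.g z w - z| ≤ (|deriv F.f z|⁻¹ + F.K * |w - F.f z| ^ F.β) * |w - F.f z| := by
  have hcenter : F.f z ∈ ball (F.f z) (2 * F.r z) :=
    mem_ball_self (by linarith [hA.r_pos hz])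
  have hbound := norm_image_sub_le_of_deriv_holder (zero_le_one.trans F.hK.le) F.hβ0.le
    (fun _ => hA.differentiableAt_g hz) (fun _ hv => hA.abs_deriv_g_sub_le hz hv hcenter) hw
  rwa [hA.g_f hz, hA.deriv_g_f hz, norm_inv] at hbound

end SatA

end GoodMap

section NonuniformlyExpanding

variable {F : GoodMap} {χ : ℝ} {x : ℤ → ℝ}

theorem inMhat.map_neg_one {f : ℝ → ℝ} (hx : inMhat f x) : f (x (-1)) = x 0 :=
  hx.2 0

theorem inMhat.map_zero {f : ℝ → ℝ} (hx : inMhat f x) : f (x 0) = x 1 :=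
  hx.2 1

theorem mem_regularPoints_of_mem_NUE (hx : x ∈ NUE F χ) (n : ℤ) : x n ∈ F.regularPoints := by
  have hf : F.f (x n) = x (n + 1) := by simpa using hx.1.2 (n + 1)
  exact ⟨hx.1.1 n, hx.2.1 n, hf ▸ hx.2.1 (n + 1)⟩

theorem summable_pesinTerm_of_mem_NUE (hx : x ∈ NUE F χ) : Summable (pesinTerm F.f χ x) := by
  obtain ⟨-, -, -, l, hl, hlim⟩ := hx
  exact summable_exp_mul_sq_of_tendsto_log_div hl hlim

theorem one_le_uPes_of_mem_NUE (hx : x ∈ NUE F χ) : 1 ≤ uPes F.f χ x :=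
  one_le_uPes (summable_pesinTerm_of_mem_NUE hx)

theorem one_le_uPes_fhatI_of_mem_NUE (hx : x ∈ NUE F χ) : 1 ≤ uPes F.f χ (fhatI (-1) x) :=
  one_le_uPes (summable_pesinTerm_fhatI
    (GoodMap.deriv_ne_zero_of_mem_regularPoints (mem_regularPoints_of_mem_NUE hx (-1)))
    (summable_pesinTerm_of_mem_NUE hx))

theorem rho_nonneg (F : GoodMap) (x : ℤ → ℝ) : 0 ≤ rho F x :=
  le_min (F.dS_nonneg _) (le_min (F.dS_nonneg _) (F.dS_nonneg _))

theorem rho_le_one (hx : inMhat F.f x) : rho F x ≤ 1 :=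
  (min_le_left _ _).trans (GoodMap.dS_le_one (hx.1 _))

theorem rho_rpow_lt_r_neg_one (hA : F.SatA) (hx : x ∈ NUE F χ) :
    rho F x ^ F.a < F.r (x (-1)) := by
  refine hA.rpow_lt_r (mem_regularPoints_of_mem_NUE hx _) (rho_nonneg F x) (min_le_left _ _) ?_
  rw [hx.1.map_neg_one]
  exact (min_le_right _ _).trans (min_le_left _ _)

theorem rho_rpow_lt_r_zero (hA : F.SatA) (hx : x ∈ NUE F χ) : rho F x ^ F.a < F.r (x 0) := by
  refine hA.rpow_lt_r (mem_regularPoints_of_mem_NUE hx _) (rho_nonneg F x)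
    ((min_le_right _ _).trans (min_le_left _ _)) ?_
  rw [hx.1.map_zero]
  exact (min_le_right _ _).trans (min_le_right _ _)

end NonuniformlyExpanding

section PesinChart

variable {f : ℝ → ℝ} {χ : ℝ} {x y : ℤ → ℝ}

theorem abs_Psi_sub (f : ℝ → ℝ) (χ : ℝ) (x : ℤ → ℝ) (t : ℝ) :
    |Psi f χ x t - x 0| = |t| / uPes f χ x := by
  rw [Psi, add_sub_cancel_right, abs_div, abs_of_nonneg (uPes_nonneg f χ x)]

theorem Psi_mem_ball (hu : 1 ≤ uPes f χ x) {t R : ℝ} (ht : |t| < R) :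
    Psi f χ x t ∈ ball (x 0) R := by
  rw [mem_ball, Real.dist_eq, abs_Psi_sub]
  exact (div_le_self (abs_nonneg t) hu).trans_lt ht

theorem Psi_Gmap2 {F : GoodMap} (hu : uPes F.f χ y ≠ 0) (t : ℝ) :
    Psi F.f χ y (Gmap2 F χ x y t) = ghat F x (Psi F.f χ x t) := by
  rw [Psi, Gmap2, mul_div_cancel_left₀ _ hu, sub_add_cancel]

theorem Gmap2_eq_add {F : GoodMap} (hv : uPes F.f χ (fhatI (-1) x) ≠ 0) (t : ℝ) :
    Gmap2 F χ x y t = uPes F.f χ y / uPes F.f χ (fhatI (-1) x) * Gmap F χ x t +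
      uPes F.f χ y * (x (-1) - y 0) := by
  rw [Gmap, ← mul_assoc, div_mul_cancel₀ _ hv, Gmap2]
  ring

end PesinChart

section ChartSize

variable {F : GoodMap} {χ ε : ℝ} {c : Chart}

theorem Qtilde_nonneg (F : GoodMap) (χ : ℝ) (hε : 0 ≤ ε) (x : ℤ → ℝ) :
    0 ≤ Qtilde F χ ε x := by
  have hu := uPes_nonneg F.f χ x
  have hv := uPes_nonneg F.f χ (fhatI (-1) x)
  have hρ := rho_nonneg F x
  unfold Qtilde
  positivity

theorem Qeps_le_Qtilde (F : GoodMap) (χ : ℝ) (hε : 0 ≤ ε) (x : ℤ → ℝ) :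
    Qeps F χ ε x ≤ Qtilde F χ ε x :=
  Real.sSup_le (fun _ hq => hq.2) (Qtilde_nonneg F χ hε x)

namespace IsChart

theorem p_le_rpow_mul_uPes_rpow (hc : IsChart F χ ε c) (hε : 0 ≤ ε) :
    c.p ≤ ε ^ (3 / F.β) * uPes F.f χ c.x ^ (-(24 / F.β)) :=
  (hc.2.2.trans (Qeps_le_Qtilde F χ hε c.x)).trans
    (mul_le_mul_of_nonneg_left (min_le_left _ _) (by positivity))

theorem p_le_rpow_mul_uPes_fhatI_rpow_mul_rho_rpow (hc : IsChart F χ ε c) (hε : 0 ≤ ε) :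
    c.p ≤ ε ^ (3 / F.β) *
      (uPes F.f χ (fhatI (-1) c.x) ^ (-(12 / F.β)) * rho F c.x ^ (72 * F.a / F.β)) :=
  (hc.2.2.trans (Qeps_le_Qtilde F χ hε c.x)).trans
    (mul_le_mul_of_nonneg_left (min_le_right _ _) (by positivity))

theorem p_mul_uPes_le (hc : IsChart F χ ε c) (hε : 0 ≤ ε) (hε1 : ε ≤ 1) :
    c.p * uPes F.f χ c.x ≤ ε := by
  have hu := one_le_uPes_of_mem_NUE hc.1
  rw [← le_div_iff₀ (by linarith), div_eq_mul_inv]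
  refine (hc.p_le_rpow_mul_uPes_rpow hε).trans (rpow_mul_rpow_neg_le_mul_inv hε hε1 hu ?_ ?_) <;>
    exact (one_le_div₀ F.hβ0).2 (by linarith [F.hβ1])

theorem p_le_one (hc : IsChart F χ ε c) (hε : 0 ≤ ε) (hε1 : ε ≤ 1) : c.p ≤ 1 :=
  (le_mul_of_one_le_right hc.2.1.le (one_le_uPes_of_mem_NUE hc.1)).trans
    ((hc.p_mul_uPes_le hε hε1).trans hε1)

theorem p_rpow_mul_uPes_fhatI_le (hc : IsChart F χ ε c) (hε : 0 ≤ ε) (hε1 : ε ≤ 1) :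
    c.p ^ F.β * uPes F.f χ (fhatI (-1) c.x) ≤ ε := by
  have hv := one_le_uPes_fhatI_of_mem_NUE hc.1
  set v := uPes F.f χ (fhatI (-1) c.x)
  have hv0 : 0 < v := by linarith
  have hβ := F.hβ0
  have ha := F.ha
  have hρ : rho F c.x ^ (72 * F.a / F.β) ≤ 1 :=
    Real.rpow_le_one (rho_nonneg F c.x) (rho_le_one hc.1.1) (by positivity)
  rw [← le_div_iff₀ hv0, div_eq_mul_inv]
  calc c.p ^ F.β
      ≤ (ε ^ (3 / F.β) * v ^ (-(12 / F.β))) ^ F.β := by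
        refine Real.rpow_le_rpow hc.2.1.le ?_ hβ.le
        refine (hc.p_le_rpow_mul_uPes_fhatI_rpow_mul_rho_rpow hε).trans ?_
        gcongr
        exact mul_le_of_le_one_right (by positivity) hρ
    _ = ε ^ (3 : ℝ) * v ^ (-12 : ℝ) := by
        rw [Real.mul_rpow (by positivity) (by positivity), ← Real.rpow_mul hε,
          ← Real.rpow_mul hv0.le, neg_mul, div_mul_cancel₀ _ hβ.ne', div_mul_cancel₀ _ hβ.ne']
    _ ≤ ε * v⁻¹ := rpow_mul_rpow_neg_le_mul_inv hε hε1 hv (by norm_num) (by norm_num)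

theorem p_le_rho_rpow (hc : IsChart F χ ε c) (hε : 0 ≤ ε) (hε1 : ε ≤ 1) :
    c.p ≤ rho F c.x ^ F.a := by
  have hβ := F.hβ0
  have ha := F.ha
  have hρ := rho_nonneg F c.x
  have hεpow : ε ^ (3 / F.β) ≤ 1 := Real.rpow_le_one hε hε1 (by positivity)
  have hvpow : uPes F.f χ (fhatI (-1) c.x) ^ (-(12 / F.β)) ≤ 1 :=
    Real.rpow_le_one_of_one_le_of_nonpos (one_le_uPes_fhatI_of_mem_NUE hc.1)
      (neg_nonpos.2 (by positivity))
  have hexponent : F.a ≤ 72 * F.a / F.β := by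
    rw [le_div_iff₀ hβ]
    nlinarith [F.hβ1]
  calc c.p
      ≤ ε ^ (3 / F.β) *
          (uPes F.f χ (fhatI (-1) c.x) ^ (-(12 / F.β)) * rho F c.x ^ (72 * F.a / F.β)) :=
        hc.p_le_rpow_mul_uPes_fhatI_rpow_mul_rho_rpow hε
    _ ≤ 1 * (1 * rho F c.x ^ (72 * F.a / F.β)) := by
        have hv := uPes_nonneg F.f χ (fhatI (-1) c.x)
        gcongr
    _ ≤ rho F c.x ^ F.a := by
        rw [one_mul, one_mul]
        exact Real.rpow_le_rpow_of_exponent_ge' hρ (rho_le_one hc.1.1) (by linarith) hexponent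

theorem Psi_mem_ball_zero (hA : F.SatA) (hc : IsChart F χ ε c) (hε : 0 ≤ ε) (hε1 : ε ≤ 1)
    {t : ℝ} (ht : |t| ≤ c.p) : Psi F.f χ c.x t ∈ ball (c.x 0) (2 * F.r (c.x 0)) := by
  have hr := (hc.p_le_rho_rpow hε hε1).trans_lt (rho_rpow_lt_r_zero hA hc.1)
  exact Psi_mem_ball (one_le_uPes_of_mem_NUE hc.1) (by linarith [hc.2.1])

theorem Psi_mem_ball_f_neg_one (hA : F.SatA) (hc : IsChart F χ ε c) (hε : 0 ≤ ε)
    (hε1 : ε ≤ 1) {t : ℝ} (ht : |t| ≤ c.p) :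
    Psi F.f χ c.x t ∈ ball (F.f (c.x (-1))) (2 * F.r (c.x (-1))) := by
  have hr := (hc.p_le_rho_rpow hε hε1).trans_lt (rho_rpow_lt_r_neg_one hA hc.1)
  rw [hc.1.1.map_neg_one]
  exact Psi_mem_ball (one_le_uPes_of_mem_NUE hc.1) (by linarith [hc.2.1])

theorem injOn_chartRange (hA : F.SatA) (hc : IsChart F χ ε c) (hε : 0 ≤ ε) (hε1 : ε ≤ 1) :
    InjOn F.f (chartRange F χ c) :=
  (hA.injOn_f (mem_regularPoints_of_mem_NUE hc.1 0)).mono <| image_subset_iff.2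
    fun _ ht => mem_preimage.2 (hc.Psi_mem_ball_zero hA hε hε1 (abs_le.2 ht))

theorem f_ghat_Psi (hA : F.SatA) (hc : IsChart F χ ε c) (hε : 0 ≤ ε) (hε1 : ε ≤ 1) {t : ℝ}
    (ht : |t| ≤ c.p) : F.f (ghat F c.x (Psi F.f χ c.x t)) = Psi F.f χ c.x t :=
  hA.f_g (mem_regularPoints_of_mem_NUE hc.1 (-1)) (hc.Psi_mem_ball_f_neg_one hA hε hε1 ht)

theorem abs_Gmap_le (hA : F.SatA) (hc : IsChart F χ ε c) (hε : 0 ≤ ε) (hε1 : ε ≤ 1) {t : ℝ}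
    (ht : |t| ≤ c.p) : |Gmap F χ c.x t| ≤ (Real.exp (-χ) + F.K * ε) * |t| := by
  have hbranch := hA.abs_g_sub_le (mem_regularPoints_of_mem_NUE hc.1 (-1))
    (hc.Psi_mem_ball_f_neg_one hA hε hε1 ht)
  rw [hc.1.1.map_neg_one, abs_Psi_sub] at hbranch
  have hshift := uPes_fhatI_mul_inv_abs_deriv_le (summable_pesinTerm_of_mem_NUE hc.1)
  have hsize := hc.p_rpow_mul_uPes_fhatI_le hε hε1
  have hu := one_le_uPes_of_mem_NUE hc.1
  have hv := uPes_nonneg F.f χ (fhatI (-1) c.x)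
  set u := uPes F.f χ c.x
  set v := uPes F.f χ (fhatI (-1) c.x) with hvdef
  set b := |deriv F.f (c.x (-1))|⁻¹
  have hu0 : 0 < u := by linarith
  have hK := F.hK
  have hβ := F.hβ0
  have htu : |t| / u ≤ |t| := div_le_self (abs_nonneg t) hu
  rw [Gmap, abs_mul, ← hvdef, abs_of_nonneg hv]
  calc v * |ghat F c.x (Psi F.f χ c.x t) - c.x (-1)|
      ≤ v * ((b + F.K * (|t| / u) ^ F.β) * (|t| / u)) := by gcongr; exact hbranch
    _ ≤ v * ((b + F.K * c.p ^ F.β) * (|t| / u)) := by gcongr; exact htu.trans ht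
    _ = (v * b) * (|t| / u) + F.K * (c.p ^ F.β * v) * (|t| / u) := by ring
    _ ≤ (Real.exp (-χ) * u) * (|t| / u) + F.K * ε * |t| := by gcongr
    _ = (Real.exp (-χ) + F.K * ε) * |t| := by
        rw [mul_assoc, mul_div_cancel₀ _ hu0.ne', add_mul]

theorem uPes_mul_p_mul_p_pow_four_le (hc : IsChart F χ ε c) (hε : 0 ≤ ε) (hε1 : ε ≤ 1) :
    uPes F.f χ c.x * (c.p * c.p) ^ 4 ≤ ε * c.p := by
  have hp := hc.2.1.le
  have hu := uPes_nonneg F.f χ c.x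
  have hpow : (c.p * c.p) ^ 4 ≤ c.p * c.p :=
    pow_le_of_le_one (by positivity) (mul_le_one₀ (hc.p_le_one hε hε1) hp (hc.p_le_one hε hε1))
      (by norm_num)
  calc uPes F.f χ c.x * (c.p * c.p) ^ 4 ≤ uPes F.f χ c.x * (c.p * c.p) := by gcongr
    _ = c.p * uPes F.f χ c.x * c.p := by ring
    _ ≤ ε * c.p := by gcongr; exact hc.p_mul_uPes_le hε hε1

end IsChart

end ChartSize

section WeakEdges

variable {F : GoodMap} {χ ε : ℝ} {c₁ c₂ v w : Chart}

theorem Overlap.abs_sub_le (h : Overlap F χ ε c₁ c₂) :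
    |c₁.x 0 - c₂.x 0| ≤ (c₁.p * c₂.p) ^ 4 :=
  (le_add_of_nonneg_right (abs_nonneg _)).trans h.2.2.le

theorem Overlap.uPes_div_le (h : Overlap F χ ε c₁ c₂) (hu : 0 < uPes F.f χ c₂.x) :
    uPes F.f χ c₂.x / uPes F.f χ c₁.x ≤ 1 + uPes F.f χ c₂.x * (c₁.p * c₂.p) ^ 4 := by
  have hinv : (uPes F.f χ c₁.x)⁻¹ ≤ (uPes F.f χ c₂.x)⁻¹ + (c₁.p * c₂.p) ^ 4 := by
    rw [← sub_le_iff_le_add']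
    exact (le_abs_self _).trans ((le_add_of_nonneg_left (abs_nonneg _)).trans h.2.2.le)
  calc uPes F.f χ c₂.x / uPes F.f χ c₁.x
      ≤ uPes F.f χ c₂.x * ((uPes F.f χ c₂.x)⁻¹ + (c₁.p * c₂.p) ^ 4) := by
        rw [div_eq_mul_inv]
        gcongr
    _ = 1 + uPes F.f χ c₂.x * (c₁.p * c₂.p) ^ 4 := by rw [mul_add, mul_inv_cancel₀ hu.ne']

/-- A factor `κ` such that `G_{x̂,ŷ}` maps `[-p, p]` into `[-κq, κq]` for every weak edge
`Ψ_{ŷ}^q ⤎ Ψ_{x̂}^p`: the first summand accounts for `G_{x̂}` and the change of scale, the second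
for the distance between the centres of the overlapping charts. -/
def contractionBound (K χ ε : ℝ) : ℝ :=
  (1 + ε) * ((Real.exp (-χ) + K * ε) * Real.exp ε) + ε

theorem eventually_contractionBound_lt_one (K : ℝ) {χ : ℝ} (hχ : 0 < χ) :
    ∀ᶠ ε in 𝓝 0, contractionBound K χ ε < 1 := by
  have hcont : Continuous (contractionBound K χ) := by
    unfold contractionBound
    fun_prop
  exact (hcont.tendsto 0).eventually_lt_const (by simpa [contractionBound] using hχ)

namespace WeakEdge

theorem uPes_div_le (hvw : WeakEdge F χ ε v w) (hε : 0 ≤ ε) (hε1 : ε ≤ 1) :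
    uPes F.f χ v.x / uPes F.f χ (fhatI (-1) w.x) ≤ 1 + ε := by
  obtain ⟨hv, -, hoverlap, -⟩ := hvw
  have hu := one_le_uPes_of_mem_NUE hv.1
  calc uPes F.f χ v.x / uPes F.f χ (fhatI (-1) w.x)
      ≤ 1 + uPes F.f χ v.x * (v.p * v.p) ^ 4 := hoverlap.uPes_div_le (by linarith)
    _ ≤ 1 + ε * v.p := by grw [hv.uPes_mul_p_mul_p_pow_four_le hε hε1]
    _ ≤ 1 + ε := by gcongr; exact mul_le_of_le_one_right hε (hv.p_le_one hε hε1)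

theorem uPes_mul_abs_sub_le (hvw : WeakEdge F χ ε v w) (hε : 0 ≤ ε) (hε1 : ε ≤ 1) :
    uPes F.f χ v.x * |w.x (-1) - v.x 0| ≤ ε * v.p :=
  (mul_le_mul_of_nonneg_left hvw.2.2.1.abs_sub_le (uPes_nonneg F.f χ v.x)).trans
    (hvw.1.uPes_mul_p_mul_p_pow_four_le hε hε1)

theorem abs_Gmap2_le (hA : F.SatA) (hvw : WeakEdge F χ ε v w) (hε : 0 ≤ ε) (hε1 : ε ≤ 1)
    {t : ℝ} (ht : |t| ≤ w.p) :
    |Gmap2 F χ w.x v.x t| ≤ contractionBound F.K χ ε * v.p := by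
  have hu := uPes_nonneg F.f χ v.x
  have hu' := one_le_uPes_fhatI_of_mem_NUE hvw.2.1.1
  have hK := F.hK
  rw [Gmap2_eq_add (by linarith)]
  set u := uPes F.f χ v.x
  set u' := uPes F.f χ (fhatI (-1) w.x)
  calc |u / u' * Gmap F χ w.x t + u * (w.x (-1) - v.x 0)|
      ≤ u / u' * |Gmap F χ w.x t| + u * |w.x (-1) - v.x 0| := by
        refine (abs_add_le _ _).trans_eq ?_
        rw [abs_mul, abs_mul, abs_of_nonneg hu, abs_of_nonneg (by positivity : 0 ≤ u / u')]
    _ ≤ (1 + ε) * ((Real.exp (-χ) + F.K * ε) * |t|) + ε * v.p := by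
        refine add_le_add ?_ (hvw.uPes_mul_abs_sub_le hε hε1)
        gcongr
        · exact hvw.uPes_div_le hε hε1
        · exact hvw.2.1.abs_Gmap_le hA hε hε1 ht
    _ ≤ (1 + ε) * ((Real.exp (-χ) + F.K * ε) * (Real.exp ε * v.p)) + ε * v.p := by
        gcongr
        exact ht.trans hvw.2.2.2
    _ = contractionBound F.K χ ε * v.p := by
        rw [contractionBound]
        ring

theorem mapsTo_Gmap2 (hA : F.SatA) (hvw : WeakEdge F χ ε v w) (hε : 0 ≤ ε) (hε1 : ε ≤ 1)
    (hcontr : contractionBound F.K χ ε ≤ 1) :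
    MapsTo (Gmap2 F χ w.x v.x) (Icc (-w.p) w.p) (Icc (-v.p) v.p) := fun _ ht =>
  abs_le.1 <| (hvw.abs_Gmap2_le hA hε hε1 (abs_le.2 ht)).trans
    (mul_le_of_le_one_left hvw.1.2.1.le hcontr)

end WeakEdge

end WeakEdges

/-- Lemma 2.8 on weak edges. -/
theorem weak_edge_lemma (F : GoodMap) (hA : F.SatA) (χ : ℝ) (hχ : 0 < χ) :
    ∃ ε₀ > 0, ∀ ε : ℝ, 0 < ε → ε < ε₀ →
      ∀ x y : ℤ → ℝ, ∀ p q : ℝ, WeakEdge F χ ε ⟨y, q⟩ ⟨x, p⟩ →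
        Set.MapsTo (Gmap2 F χ x y) (Set.Icc (-p) p) (Set.Icc (-q) q) ∧
        ∀ z ∈ Psi F.f χ x '' Set.Icc (-p) p,
          (ghat F x z ∈ Psi F.f χ y '' Set.Icc (-q) q ∧ F.f (ghat F x z) = z) ∧
          ∀ w ∈ Psi F.f χ y '' Set.Icc (-q) q, F.f w = z → w = ghat F x z := by
  have hsmall : ∀ᶠ ε in 𝓝[>] (0 : ℝ), ε ≤ 1 ∧ contractionBound F.K χ ε < 1 :=
    nhdsWithin_le_nhds <|
      (eventually_le_nhds zero_lt_one).and (eventually_contractionBound_lt_one F.K hχ)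
  obtain ⟨ε₀, hε₀, hsub⟩ := mem_nhdsGT_iff_exists_Ioo_subset.1 hsmall
  refine ⟨ε₀, hε₀, fun ε hε hεε₀ x y p q hW => ?_⟩
  obtain ⟨hε1, hcontr⟩ := hsub ⟨hε, hεε₀⟩
  have hy : IsChart F χ ε ⟨y, q⟩ := hW.1
  have hx : IsChart F χ ε ⟨x, p⟩ := hW.2.1
  have hmaps := hW.mapsTo_Gmap2 hA hε.le hε1 hcontr.le
  refine ⟨hmaps, ?_⟩
  rintro _ ⟨t, ht, rfl⟩
  have hu : uPes F.f χ y ≠ 0 := (zero_lt_one.trans_le (one_le_uPes_of_mem_NUE hy.1)).ne'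
  have hrange : ghat F x (Psi F.f χ x t) ∈ chartRange F χ ⟨y, q⟩ :=
    ⟨Gmap2 F χ x y t, hmaps ht, Psi_Gmap2 hu t⟩
  have hsection := hx.f_ghat_Psi hA hε.le hε1 (abs_le.2 ht)
  exact ⟨⟨hrange, hsection⟩, fun w hw hfw =>
    hy.injOn_chartRange hA hε.le hε1 hw hrange (hfw.trans hsection.symm)⟩

end OneDim
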